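/- arXiv:2012.08955 — 3 statements merged into one kernel-verified Lean document; each statement's English description precedes it below -/
import Mathlib

section
/- Let n ≥ 2, let K ⊂ ℝⁿ be a convex body with the origin in its interior, let 0 ≤ λ < 1, and let c ≥ vol_n(K). Then the sublevel set {t ∈ ℝⁿ : G_{K,λ}(t) ≤ c} is a convex body, i.e., a compact convex set with nonempty interior. -/
open MeasureTheory Set Pointwise Metric

/-- A convex body: a compact convex set with nonempty interior. -/
def IsConvexBody {n : ℕ} (K : Set (EuclideanSpace ℝ (Fin n))) : Prop :=
  IsCompact K ∧ Convex ℝ K ∧ (interior K).Nonempty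

/-- The λ-homothetic convex hull function `G_{K,λ}(t) = volₙ(conv(K ∪ (λK + t)))`. -/
noncomputable def homChf {n : ℕ} (K : Set (EuclideanSpace ℝ (Fin n))) (l : ℝ)
    (t : EuclideanSpace ℝ (Fin n)) : ℝ :=
  (volume (convexHull ℝ (K ∪ (t +ᵥ l • K)))).toReal


abbrev hullSet {n : ℕ} (K : Set (EuclideanSpace ℝ (Fin n))) (l : ℝ)
    (t : EuclideanSpace ℝ (Fin n)) : Set (EuclideanSpace ℝ (Fin n)) :=
  convexHull ℝ (K ∪ (t +ᵥ l • K))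

theorem mem_hullSet {n : ℕ} {K : Set (EuclideanSpace ℝ (Fin n))} (hc : Convex ℝ K)
    (hne : K.Nonempty) (l : ℝ) (t p : EuclideanSpace ℝ (Fin n)) :
    p ∈ hullSet K l t ↔ ∃ y ∈ Icc (0:ℝ) 1, ∃ k ∈ K, ∃ k' ∈ K,
      (1 - y) • k + y • (t + l • k') = p := by
  have h1 : Convex ℝ (t +ᵥ l • K) := (hc.smul l).vadd t
  have h2 : (t +ᵥ l • K).Nonempty := hne.smul_set.vadd_set
  rw [hullSet, convexHull_union hne h2, hc.convexHull_eq, h1.convexHull_eq, mem_convexJoin]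
  constructor
  · rintro ⟨a, ha, b, hb, a', b', ha', hb', hab, rfl⟩
    obtain ⟨_, ⟨k', hk', rfl⟩, rfl⟩ := hb
    refine ⟨b', ⟨hb', by linarith⟩, a, ha, k', hk', ?_⟩
    have : 1 - b' = a' := by linarith
    simp [this]
  · rintro ⟨y, ⟨hy0, hy1⟩, k, hk, k', hk', rfl⟩
    exact ⟨k, hk, t + l • k', ⟨l • k', ⟨k', hk', rfl⟩, rfl⟩, 1 - y, y, by linarith, hy0,
      by ring, rfl⟩

theorem isCompact_hullSet {n : ℕ} {K : Set (EuclideanSpace ℝ (Fin n))} (hK : IsCompact K)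
    (hc : Convex ℝ K) (hne : K.Nonempty) (l : ℝ) (t : EuclideanSpace ℝ (Fin n)) :
    IsCompact (hullSet K l t) := by
  have : hullSet K l t = (fun q : ℝ × EuclideanSpace ℝ (Fin n) × EuclideanSpace ℝ (Fin n) =>
      (1 - q.1) • q.2.1 + q.1 • (t + l • q.2.2)) '' (Icc (0:ℝ) 1 ×ˢ K ×ˢ K) := by
    ext p
    rw [mem_hullSet hc hne]
    constructor
    · rintro ⟨y, hy, k, hk, k', hk', rfl⟩
      exact ⟨(y, k, k'), ⟨hy, hk, hk'⟩, rfl⟩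
    · rintro ⟨⟨y, k, k'⟩, ⟨hy, hk, hk'⟩, rfl⟩
      exact ⟨y, hy, k, hk, k', hk', rfl⟩
  rw [this]
  exact (isCompact_Icc.prod (hK.prod hK)).image (by fun_prop)

theorem volume_le_of_fibers {n : ℕ} {u : EuclideanSpace ℝ (Fin n)} (hu : u ≠ 0)
    {A A0 A1 : Set (EuclideanSpace ℝ (Fin n))} (hA : MeasurableSet A) (hA0 : MeasurableSet A0)
    (hA1 : MeasurableSet A1) (a b : ENNReal)
    (h : ∀ x, volume {r : ℝ | r • u + x ∈ A} ≤ a * volume {r : ℝ | r • u + x ∈ A0} +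
      b * volume {r : ℝ | r • u + x ∈ A1}) :
    volume A ≤ a * volume A0 + b * volume A1 := by
  let W := (Submodule.span ℝ {u})ᗮ
  let e : (ℝ × W) ≃ₗ[ℝ] EuclideanSpace ℝ (Fin n) :=
    (LinearEquiv.prodCongr (LinearEquiv.toSpanNonzeroSingleton ℝ _ u hu)
      (LinearEquiv.refl ℝ W)).trans
      (Submodule.prodEquivOfIsCompl _ _ (Submodule.isCompl_orthogonal (Submodule.span ℝ {u})))
  let f := e.toContinuousLinearEquiv
  have hf : ∀ r w, f (r, w) = r • u + (w : EuclideanSpace ℝ (Fin n)) := by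
    intro r w
    simp [f, e]
  let μ : Measure (ℝ × W) := (volume : Measure ℝ).prod (volume : Measure W)
  have : (Measure.map f μ).IsAddHaarMeasure := f.isAddHaarMeasure_map μ
  have key := Measure.isAddLeftInvariant_eq_smul
    (volume : Measure (EuclideanSpace ℝ (Fin n))) (Measure.map f μ)
  generalize (Measure.addHaarScalarFactor
    (volume : Measure (EuclideanSpace ℝ (Fin n))) (Measure.map f μ)) = c at key
  have fm : Measurable f := f.continuous.measurable
  have vol : ∀ B, MeasurableSet B → volume B =
      c * ∫⁻ w : W, volume {r : ℝ | r • u + (w : EuclideanSpace ℝ (Fin n)) ∈ B} := by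
    intro B hB
    rw [key, Measure.smul_apply, Measure.map_apply fm hB, Measure.prod_apply_symm (fm hB)]
    simp only [preimage, mem_setOf_eq, hf]
    rfl
  have meas : ∀ B, MeasurableSet B → Measurable fun w : W =>
      volume {r : ℝ | r • u + (w : EuclideanSpace ℝ (Fin n)) ∈ B} := by
    intro B hB
    have := measurable_measure_prodMk_right (μ := (volume : Measure ℝ)) (fm hB)
    simpa only [preimage, mem_setOf_eq, hf] using this
  rw [vol A hA, vol A0 hA0, vol A1 hA1]
  calc _ ≤ c * ∫⁻ w : W, (a * volume {r : ℝ | r • u + (w : EuclideanSpace ℝ (Fin n)) ∈ A0} +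
      b * volume {r : ℝ | r • u + (w : EuclideanSpace ℝ (Fin n)) ∈ A1}) := by
        gcongr with w
        exact h w
    _ = _ := by
        rw [lintegral_add_left ((meas A0 hA0).const_mul a), lintegral_const_mul _ (meas A0 hA0),
          lintegral_const_mul _ (meas A1 hA1)]
        ring

theorem vol_ge_of_convex {I : Set ℝ} (hI : Convex ℝ I) {a b : ℝ} (ha : a ∈ I) (hb : b ∈ I) :
    ENNReal.ofReal (b - a) ≤ volume I := by
  rw [← Real.volume_Icc]
  exact measure_mono (hI.ordConnected.out ha hb)

theorem fiber_convex {n : ℕ} {A : Set (EuclideanSpace ℝ (Fin n))} (hA : Convex ℝ A)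
    (u x : EuclideanSpace ℝ (Fin n)) : Convex ℝ {r : ℝ | r • u + x ∈ A} := by
  intro r hr r' hr' a b ha hb hab
  have := hA hr hr' ha hb hab
  simp only [mem_setOf_eq]
  convert this using 1
  have hx : x = (a + b) • x := by rw [hab, one_smul]
  conv_lhs => rw [hx]
  simp only [smul_eq_mul]
  module

theorem fiber_compact {n : ℕ} {A : Set (EuclideanSpace ℝ (Fin n))} (hA : IsCompact A)
    {u : EuclideanSpace ℝ (Fin n)} (hu : u ≠ 0) (x : EuclideanSpace ℝ (Fin n)) :
    IsCompact {r : ℝ | r • u + x ∈ A} := by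
  refine Metric.isCompact_of_isClosed_isBounded
    (hA.isClosed.preimage (f := fun r : ℝ => r • u + x) (by fun_prop)) ?_
  obtain ⟨R, hR⟩ := (Metric.isBounded_iff_subset_closedBall 0).1 hA.isBounded
  refine (Metric.isBounded_iff_subset_closedBall 0).2 ⟨(R + ‖x‖) / ‖u‖, fun r hr => ?_⟩
  have h1 := hR hr
  rw [mem_closedBall_zero_iff] at h1 ⊢
  rw [le_div_iff₀ (norm_pos_iff.2 hu), ← norm_smul]
  calc ‖r • u‖ = ‖(r • u + x) - x‖ := by simp
    _ ≤ ‖r • u + x‖ + ‖x‖ := norm_sub_le _ _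
    _ ≤ _ := by linarith

theorem volume_hull_le {n : ℕ} {K : Set (EuclideanSpace ℝ (Fin n))} (hK : IsCompact K)
    (hc : Convex ℝ K) (hne : K.Nonempty) (l : ℝ) (t0 u : EuclideanSpace ℝ (Fin n)) (hu : u ≠ 0)
    {s : ℝ} (hs0 : 0 ≤ s) (hs1 : s ≤ 1) :
    volume (hullSet K l (t0 + s • u)) ≤ ENNReal.ofReal (1 - s) * volume (hullSet K l t0) +
      ENNReal.ofReal s * volume (hullSet K l (t0 + u)) := by
  have hm : ∀ t, MeasurableSet (hullSet K l t) := fun t =>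
    (isCompact_hullSet hK hc hne l t).isClosed.measurableSet
  refine volume_le_of_fibers hu (hm _) (hm _) (hm _) _ _ fun x => ?_
  have move : ∀ r ∈ {r : ℝ | r • u + x ∈ hullSet K l (t0 + s • u)}, ∃ y : ℝ,
      r - s * y ∈ {r : ℝ | r • u + x ∈ hullSet K l t0} ∧
      r + (1 - s) * y ∈ {r : ℝ | r • u + x ∈ hullSet K l (t0 + u)} := by
    intro r hr
    obtain ⟨y, hy, k, hk, k', hk', h⟩ := (mem_hullSet hc hne _ _ _).1 hr
    have hx : x = (1 - y) • k + y • (t0 + s • u + l • k') - r • u := by rw [h]; simp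
    refine ⟨y, (mem_hullSet hc hne _ _ _).2 ⟨y, hy, k, hk, k', hk', ?_⟩,
      (mem_hullSet hc hne _ _ _).2 ⟨y, hy, k, hk, k', hk', ?_⟩⟩
    · rw [hx]; module
    · rw [hx]; module
  rcases eq_empty_or_nonempty {r : ℝ | r • u + x ∈ hullSet K l (t0 + s • u)} with hI | hI
  · rw [hI]; simp
  have hIc := fiber_compact (isCompact_hullSet hK hc hne l (t0 + s • u)) hu x
  obtain ⟨p, hp, hp'⟩ := hIc.exists_isLeast hI
  obtain ⟨q, hq, hq'⟩ := hIc.exists_isGreatest hI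
  obtain ⟨y, hy0, hy1⟩ := move p hp
  obtain ⟨z, hz0, hz1⟩ := move q hq
  have e0 := vol_ge_of_convex (fiber_convex (convex_convexHull ℝ _) u x) hy0 hz0
  have e1 := vol_ge_of_convex (fiber_convex (convex_convexHull ℝ _) u x) hy1 hz1
  calc _ ≤ volume (Icc p q) := measure_mono fun r hr => ⟨hp' hr, hq' hr⟩
    _ = ENNReal.ofReal (q - p) := Real.volume_Icc
    _ = ENNReal.ofReal ((1 - s) * ((q - s * z) - (p - s * y)) +
        s * ((q + (1 - s) * z) - (p + (1 - s) * y))) := by congr 1; ring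
    _ ≤ _ := ENNReal.ofReal_add_le
    _ ≤ _ := by
      rw [ENNReal.ofReal_mul (by linarith), ENNReal.ofReal_mul hs0]
      gcongr

theorem convexOn_homChf {n : ℕ} {K : Set (EuclideanSpace ℝ (Fin n))} (hK : IsCompact K)
    (hc : Convex ℝ K) (hne : K.Nonempty) (l : ℝ) : ConvexOn ℝ univ (homChf K l) := by
  refine ⟨convex_univ, fun t0 _ t1 _ a b ha hb hab => ?_⟩
  have ha' : a = 1 - b := by linarith
  subst ha'
  by_cases hu : t1 - t0 = 0
  · have : t1 = t0 := sub_eq_zero.1 hu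
    subst this
    rw [← add_smul, ← add_smul]; simp
  have h := volume_hull_le hK hc hne l t0 (t1 - t0) hu hb (by linarith)
  have e1 : t0 + b • (t1 - t0) = (1 - b) • t0 + b • t1 := by module
  rw [e1, add_sub_cancel] at h
  have fin : ∀ t, volume (hullSet K l t) ≠ ⊤ := fun t =>
    (isCompact_hullSet hK hc hne l t).measure_lt_top.ne
  have f0 := ENNReal.mul_ne_top (ENNReal.ofReal_ne_top (r := 1 - b)) (fin t0)
  have f1 := ENNReal.mul_ne_top (ENNReal.ofReal_ne_top (r := b)) (fin t1)
  have := ENNReal.toReal_mono (ENNReal.add_ne_top.2 ⟨f0, f1⟩) h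
  rw [ENNReal.toReal_add f0 f1, ENNReal.toReal_mul, ENNReal.toReal_mul,
    ENNReal.toReal_ofReal ha, ENNReal.toReal_ofReal hb] at this
  exact this

theorem ball_subset_hull {n : ℕ} {K : Set (EuclideanSpace ℝ (Fin n))}
    (hc : Convex ℝ K) {r : ℝ} (hr : 0 < r) (hb : ball 0 r ⊆ K) (l : ℝ)
    (t : EuclideanSpace ℝ (Fin n)) {s : ℝ} (hs0 : 0 ≤ s) (hs1 : s ≤ 1 / 2) :
    ball (s • t) (r / 2) ⊆ hullSet K l t := by
  have h0 : (0 : EuclideanSpace ℝ (Fin n)) ∈ K := hb (mem_ball_self hr)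
  intro p hp
  have h1 : 0 < 1 - s := by linarith
  refine (mem_hullSet hc ⟨0, h0⟩ _ _ _).2 ⟨s, ⟨hs0, by linarith⟩, (1 - s)⁻¹ • (p - s • t), hb ?_,
    0, h0, ?_⟩
  · rw [mem_ball_zero_iff, norm_smul, norm_inv, Real.norm_of_nonneg h1.le, inv_mul_lt_iff₀ h1]
    rw [mem_ball, dist_eq_norm] at hp
    nlinarith
  · rw [smul_inv_smul₀ h1.ne']; simp

theorem growth {n : ℕ} {K : Set (EuclideanSpace ℝ (Fin n))} (hK : IsCompact K)
    (hc : Convex ℝ K) {r : ℝ} (hr : 0 < r) (hb : ball 0 r ⊆ K) (l : ℝ)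
    (t : EuclideanSpace ℝ (Fin n)) (N : ℕ) (hN : 0 < N) (ht : 2 * (N * r) ≤ ‖t‖) :
    N * (volume (ball (0 : EuclideanSpace ℝ (Fin n)) (r / 2))).toReal ≤ homChf K l t := by
  have h0 : (0 : EuclideanSpace ℝ (Fin n)) ∈ K := hb (mem_ball_self hr)
  have hN' : (0:ℝ) < N := by exact_mod_cast hN
  let c : ℕ → EuclideanSpace ℝ (Fin n) := fun i => ((i:ℝ) / (2 * N)) • t
  have hsub : (⋃ i ∈ Finset.range N, ball (c i) (r / 2)) ⊆ hullSet K l t := by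
    refine iUnion₂_subset fun i hi => ball_subset_hull hc hr hb l t (by positivity) ?_
    have : (i:ℝ) ≤ N := by exact_mod_cast (Finset.mem_range.1 hi).le
    rw [div_le_iff₀ (by positivity)]; linarith
  have hdisj : (↑(Finset.range N) : Set ℕ).PairwiseDisjoint fun i => ball (c i) (r / 2) := by
    intro i _ j _ hij
    refine ball_disjoint_ball ?_
    rw [dist_eq_norm, ← sub_smul, norm_smul, ← sub_div, norm_div, Real.norm_of_nonneg
      (by positivity : (0:ℝ) ≤ 2 * N)]
    have : (1:ℝ) ≤ ‖(i:ℝ) - j‖ := by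
      rw [Real.norm_eq_abs]
      have : (1:ℤ) ≤ |(i:ℤ) - j| := Int.one_le_abs (by omega)
      exact_mod_cast this
    rw [div_mul_eq_mul_div, le_div_iff₀ (by positivity)]
    nlinarith [norm_nonneg t]
  have hv := measure_mono (μ := volume) hsub
  rw [measure_biUnion_finset hdisj (fun _ _ => measurableSet_ball)] at hv
  simp only [Measure.addHaar_ball_center, Finset.sum_const, Finset.card_range, nsmul_eq_mul] at hv
  have := ENNReal.toReal_mono (isCompact_hullSet hK hc ⟨0, h0⟩ l t).measure_lt_top.ne hv
  rw [ENNReal.toReal_mul] at this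
  simpa [homChf] using this

theorem stmt16 {n : ℕ} (hn : 2 ≤ n) (K : Set (EuclideanSpace ℝ (Fin n)))
    (hK : IsConvexBody K) (h0 : (0 : EuclideanSpace ℝ (Fin n)) ∈ interior K)
    (l : ℝ) (hl0 : 0 ≤ l) (hl1 : l < 1) (c : ℝ) (hc : (volume K).toReal ≤ c) :
    IsCompact {t | homChf K l t ≤ c} ∧ Convex ℝ {t | homChf K l t ≤ c} ∧
      (interior {t | homChf K l t ≤ c}).Nonempty := by
  obtain ⟨hcomp, hconv, -⟩ := hK
  have h0K := interior_subset h0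
  obtain ⟨r, hr, hb⟩ := Metric.isOpen_iff.1 isOpen_interior 0 h0
  replace hb := hb.trans interior_subset
  have hcv := convexOn_homChf hcomp hconv ⟨0, h0K⟩ l
  have hcont : Continuous (homChf K l) :=
    continuousOn_univ.1 (ConvexOn.continuousOn isOpen_univ hcv)
  refine ⟨Metric.isCompact_of_isClosed_isBounded (isClosed_le hcont continuous_const) ?_, ?_, ?_⟩
  · have hv : 0 < (volume (ball (0 : EuclideanSpace ℝ (Fin n)) (r / 2))).toReal :=
      ENNReal.toReal_pos (measure_ball_pos _ _ (by positivity)).ne' measure_ball_lt_top.ne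
    obtain ⟨N, hN⟩ := exists_nat_gt
      (max 0 (c / (volume (ball (0 : EuclideanSpace ℝ (Fin n)) (r / 2))).toReal))
    obtain ⟨hN0, hN1⟩ := max_lt_iff.1 hN
    refine (Metric.isBounded_iff_subset_closedBall 0).2 ⟨2 * (N * r), fun t ht => ?_⟩
    rw [mem_closedBall_zero_iff]
    by_contra! hlt
    have := growth hcomp hconv hr hb l t N (by exact_mod_cast hN0) hlt.le
    rw [div_lt_iff₀ hv] at hN1
    have ht' : homChf K l t ≤ c := ht
    linarith
  · simpa using hcv.convex_le c
  · have h1 : 0 < 1 - l := by linarith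
    refine ⟨0, mem_interior.2 ⟨ball 0 ((1 - l) * r), fun t ht => ?_, isOpen_ball,
      mem_ball_self (by positivity)⟩⟩
    have hk : (1 - l)⁻¹ • t ∈ K := by
      apply hb
      rw [mem_ball_zero_iff] at ht ⊢
      rwa [norm_smul, norm_inv, Real.norm_of_nonneg h1.le, inv_mul_lt_iff₀ h1]
    have hsub : K ∪ (t +ᵥ l • K) ⊆ K := by
      refine union_subset subset_rfl ?_
      rintro _ ⟨_, ⟨k, hk', rfl⟩, rfl⟩
      have := hconv hk hk' h1.le hl0 (by ring)
      rwa [smul_inv_smul₀ h1.ne'] at this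
    have : homChf K l t ≤ (volume K).toReal :=
      ENNReal.toReal_mono hcomp.measure_lt_top.ne
        (measure_mono (convexHull_min hsub hconv))
    exact this.trans hc
end

section
/- Let n ≥ 2, let P ⊂ ℝⁿ be a convex polytope with nonempty interior and let δ > 0. Then the illumination body P^δ = {x ∈ ℝⁿ : vol_n(conv(P ∪ {x})) ≤ vol_n(P) + δ} is a convex polytope, i.e., the convex hull of a finite set of points. -/
open MeasureTheory Set Pointwise Metric

/-- The illumination body `K^δ`. -/
noncomputable def illum {n : ℕ} (K : Set (EuclideanSpace ℝ (Fin n))) (δ : ℝ) :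
    Set (EuclideanSpace ℝ (Fin n)) :=
  {x | (volume (convexHull ℝ (K ∪ {x}))).toReal ≤ (volume K).toReal + δ}


theorem poly_hull {n : ℕ} {ι : Type*} [Finite ι] (u : ι → EuclideanSpace ℝ (Fin n)) (c : ι → ℝ)
    (hb : Bornology.IsBounded {x | ∀ i, inner ℝ (u i) x ≤ c i}) :
    ∃ S : Finset (EuclideanSpace ℝ (Fin n)),
      {x | ∀ i, inner ℝ (u i) x ≤ c i} = convexHull ℝ (S : Set _) := by
  classical
  set Q := {x | ∀ i, inner ℝ (u i) x ≤ c i} with hQ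
  have hcl : IsClosed Q := by
    have : Q = ⋂ i, {x | inner ℝ (u i) x ≤ c i} := by ext; simp [hQ]
    rw [this]
    exact isClosed_iInter fun i => isClosed_le (by fun_prop) (by fun_prop)
  have hco : Convex ℝ Q := by
    intro x hx y hy a b ha hb hab i
    rw [inner_add_right, inner_smul_right, inner_smul_right]
    have h1 := mul_le_mul_of_nonneg_left (hx i) ha
    have h2 := mul_le_mul_of_nonneg_left (hy i) hb
    have : c i = a * c i + b * c i := by rw [← add_mul, hab, one_mul]
    linarith
  have hcpt : IsCompact Q := Metric.isCompact_of_isClosed_isBounded hcl hb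
  have hfin : (Q.extremePoints ℝ).Finite := by
    refine Set.Finite.of_injOn (f := fun x => {i | inner ℝ (u i) x = c i})
      (t := Set.univ) (fun _ _ => Set.mem_univ _) ?_ Set.finite_univ
    intro x hx y hy hxy
    by_contra hne
    have hev : ∀ᶠ ε : ℝ in nhdsWithin 0 (Set.Ioi 0), ∀ i,
        inner ℝ (u i) (x + ε • (x - y)) ≤ c i ∧ inner ℝ (u i) (x - ε • (x - y)) ≤ c i := by
      rw [Filter.eventually_all]
      intro i
      by_cases hi : inner ℝ (u i) x = c i
      · have hi2 : inner ℝ (u i) y = c i := by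
          have : i ∈ {i | inner ℝ (u i) x = c i} := hi
          have h3 : {i | inner ℝ (u i) x = c i} = {i | inner ℝ (u i) y = c i} := hxy
          rw [h3] at this; exact this
        refine Filter.Eventually.of_forall fun ε => ?_
        simp [inner_add_right, inner_sub_right, inner_smul_right, hi, hi2]
      · have hlt : inner ℝ (u i) x < c i := lt_of_le_of_ne (hx.1 i) hi
        refine Filter.Eventually.filter_mono nhdsWithin_le_nhds ?_
        have c1 : Continuous fun ε : ℝ => inner ℝ (u i) (x + ε • (x - y)) := by fun_prop
        have c2 : Continuous fun ε : ℝ => inner ℝ (u i) (x - ε • (x - y)) := by fun_prop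
        have e1 := c1.continuousAt.eventually_lt (x₀ := 0) (continuousAt_const (y := c i)) (by simpa using hlt)
        have e2 := c2.continuousAt.eventually_lt (x₀ := 0) (continuousAt_const (y := c i)) (by simpa using hlt)
        filter_upwards [e1, e2] with ε h1 h2 using ⟨h1.le, h2.le⟩
    obtain ⟨ε, hε, hε0⟩ := (hev.and self_mem_nhdsWithin).exists
    have hε0 : 0 < ε := hε0
    have := (mem_extremePoints.1 hx).2 (x + ε • (x - y)) (fun i => (hε i).1)
      (x - ε • (x - y)) (fun i => (hε i).2)
      ⟨1/2, 1/2, by norm_num, by norm_num, by norm_num, by module⟩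
    have h1 : ε • (x - y) = 0 := by simpa using this.1
    rcases smul_eq_zero.1 h1 with h | h
    · exact hε0.ne' h
    · exact hne (sub_eq_zero.1 h)
  refine ⟨hfin.toFinset, ?_⟩
  have h := closure_convexHull_extremePoints hcpt hco
  rw [hfin.coe_toFinset]
  refine h.symm.trans ?_
  exact (hfin.isCompact_convexHull ℝ).isClosed.closure_eq

theorem hrep {n : ℕ} (P : Set (EuclideanSpace ℝ (Fin n)))
    (hP : ∃ S : Finset (EuclideanSpace ℝ (Fin n)), P = convexHull ℝ (S : Set _))
    (z : EuclideanSpace ℝ (Fin n)) (hz : z ∈ interior P) :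
    ∃ U : Finset (EuclideanSpace ℝ (Fin n)), P = {x | ∀ u ∈ U, inner ℝ u (x - z) ≤ 1} := by
  obtain ⟨S, hS⟩ := hP
  have hcl : IsClosed P := by
    rw [hS]; exact (S.finite_toSet.isCompact_convexHull ℝ).isClosed
  have hco : Convex ℝ P := by rw [hS]; exact convex_convexHull ℝ _
  obtain ⟨r, hr, hball⟩ := Metric.mem_nhds_iff.1 (mem_interior_iff_mem_nhds.1 hz)
  have hQP : ∀ w, (∀ s : S, inner ℝ (s.1 - z) w ≤ 1) → ∀ p ∈ P, inner ℝ w (p - z) ≤ 1 := by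
    intro w hw p hp
    have hc : Convex ℝ {p | inner ℝ w (p - z) ≤ 1} := by
      intro x hx y hy a b ha hb hab
      have e : a • x + b • y - z = a • (x - z) + b • (y - z) := by
        have : z = (a + b) • z := by rw [hab, one_smul]
        nth_rw 1 [this]; module
      simp only [Set.mem_ofPred_eq] at *
      rw [e, inner_add_right, inner_smul_right, inner_smul_right]
      nlinarith
    rw [hS] at hp
    refine convexHull_min ?_ hc hp
    intro s hs
    have := hw ⟨s, hs⟩
    rwa [real_inner_comm] at this
  have hb : Bornology.IsBounded {w | ∀ s : S, inner ℝ (s.1 - z) w ≤ 1} := by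
    refine (Metric.isBounded_closedBall (x := 0) (r := 2 / r)).subset ?_
    intro w hw
    rw [mem_closedBall_zero_iff]
    by_cases h0 : w = 0
    · subst h0; simp; positivity
    have hwn : 0 < ‖w‖ := norm_pos_iff.2 h0
    have := hQP w hw (z + (r / 2 / ‖w‖) • w) (hball (by
      rw [mem_ball_iff_norm, add_sub_cancel_left, norm_smul, Real.norm_of_nonneg (by positivity)]
      field_simp; linarith))
    rw [add_sub_cancel_left, inner_smul_right, real_inner_self_eq_norm_sq] at this
    rw [le_div_iff₀ hr]
    field_simp at this
    linarith
  obtain ⟨U, hU⟩ := poly_hull (fun s : S => s.1 - z) (fun _ => 1) hb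
  refine ⟨U, Set.Subset.antisymm ?_ ?_⟩
  · intro x hx u hu
    refine hQP u ?_ x hx
    have : u ∈ convexHull ℝ (U : Set (EuclideanSpace ℝ (Fin n))) := subset_convexHull ℝ _ hu
    rw [← hU] at this
    exact this
  · intro x hx
    by_contra hxP
    obtain ⟨f, c, hf1, hf2⟩ := geometric_hahn_banach_closed_point hco hcl hxP
    set w := (InnerProductSpace.toDual ℝ _).symm f with hw
    have hfw : ∀ y, f y = inner ℝ w y := fun y => by
      rw [hw, InnerProductSpace.toDual_symm_apply]
    have hd : 0 < c - f z := by linarith [hf1 z (interior_subset hz)]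
    have hmem : (c - f z)⁻¹ • w ∈ convexHull ℝ (U : Set (EuclideanSpace ℝ (Fin n))) := by
      rw [← hU]
      intro s
      have := hf1 s.1 (by rw [hS]; exact subset_convexHull ℝ _ s.2)
      rw [inner_smul_right, real_inner_comm, inner_sub_right, ← hfw, ← hfw, inv_mul_le_iff₀ hd]
      linarith
    have hc : Convex ℝ {w | inner ℝ w (x - z) ≤ 1} := by
      intro p hp q hq a b ha hb hab
      simp only [Set.mem_ofPred_eq] at *
      rw [inner_add_left, real_inner_smul_left, real_inner_smul_left]
      nlinarith
    have h := convexHull_min (t := {w | inner ℝ w (x - z) ≤ 1}) (fun u hu => hx u hu) hc hmem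
    simp only [Set.mem_ofPred_eq] at h
    rw [real_inner_smul_left, inner_sub_right, ← hfw, ← hfw, inv_mul_le_iff₀ hd] at h
    linarith

theorem cone_mem {n : ℕ} {F : Set (EuclideanSpace ℝ (Fin n))} (hF : Convex ℝ F)
    {x y : EuclideanSpace ℝ (Fin n)} (hy : y ∈ convexHull ℝ (insert x F)) :
    y = x ∨ ∃ p ∈ F, ∃ s : ℝ, 0 ≤ s ∧ s ≤ 1 ∧ y = x + s • (p - x) := by
  rcases F.eq_empty_or_nonempty with rfl | hne
  · left; simpa using hy
  · right
    rw [convexHull_insert hne, hF.convexHull_eq, mem_convexJoin] at hy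
    obtain ⟨x', hx', p, hp, h⟩ := hy
    rw [Set.mem_singleton_iff] at hx'
    subst hx'
    rw [segment_eq_image'] at h
    obtain ⟨s, hs, rfl⟩ := h
    exact ⟨p, hp, s, hs.1, hs.2, rfl⟩

theorem cone_mem' {n : ℕ} {F : Set (EuclideanSpace ℝ (Fin n))}
    {x p : EuclideanSpace ℝ (Fin n)} (hp : p ∈ F) {s : ℝ} (h0 : 0 ≤ s) (h1 : s ≤ 1) :
    x + s • (p - x) ∈ convexHull ℝ (insert x F) := by
  have hx : x ∈ convexHull ℝ (insert x F) := subset_convexHull ℝ _ (Set.mem_insert _ _)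
  have hp' : p ∈ convexHull ℝ (insert x F) := subset_convexHull ℝ _ (Set.mem_insert_of_mem _ hp)
  exact (convex_convexHull ℝ _).add_smul_sub_mem hx hp' ⟨h0, h1⟩

/-- The affine function attached to `u`. -/
noncomputable def aff {n : ℕ} (z u x : EuclideanSpace ℝ (Fin n)) : ℝ := inner ℝ u (x - z) - 1

theorem aff_comb {n : ℕ} (z u x p : EuclideanSpace ℝ (Fin n)) (s : ℝ) :
    aff z u (x + s • (p - x)) = (1 - s) * aff z u x + s * aff z u p := by
  simp only [aff, inner_add_right, inner_sub_right, inner_smul_right]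
  ring

theorem aff_cont {n : ℕ} (z u : EuclideanSpace ℝ (Fin n)) : Continuous (aff z u) := by
  unfold aff; fun_prop

theorem hyper_null {n : ℕ} (w : EuclideanSpace ℝ (Fin n)) (c : ℝ) (h : w ≠ 0 ∨ c ≠ 0) :
    volume {x : EuclideanSpace ℝ (Fin n) | inner ℝ w x = c} = 0 := by
  by_cases hw : w = 0
  · have hc : c ≠ 0 := by tauto
    have : {x : EuclideanSpace ℝ (Fin n) | inner ℝ w x = c} = ∅ := by
      ext x; simp [hw, hc.symm]
    rw [this]; simp
  · let A : AffineSubspace ℝ (EuclideanSpace ℝ (Fin n)) :=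
      { carrier := {x | inner ℝ w x = c}
        smul_vsub_vadd_mem' := by
          intro k p q r hp hq hr
          change inner ℝ w _ = c
          change inner ℝ w p = c at hp
          change inner ℝ w q = c at hq
          change inner ℝ w r = c at hr
          simp [inner_add_right, inner_sub_right, inner_smul_right, hp, hq, hr] }
    have hA : A ≠ ⊤ := by
      intro hA
      have h1 : ∀ x, inner ℝ w x = c := fun x => by
        have : x ∈ A := by rw [hA]; trivial
        exact this
      have h0 := h1 0
      have h2 := h1 w
      rw [inner_zero_right] at h0
      rw [← h0] at h2
      exact hw (inner_self_eq_zero.1 h2)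
    exact Measure.addHaar_affineSubspace volume A hA

theorem cone_scale {n : ℕ} (z u x x₀ : EuclideanSpace ℝ (Fin n))
    (F : Set (EuclideanSpace ℝ (Fin n))) (hF : ∀ p ∈ F, aff z u p = 0)
    (h0 : 0 < aff z u x₀) (hx : 0 < aff z u x) :
    (volume (convexHull ℝ (insert x F))).toReal =
      (volume (convexHull ℝ (insert x₀ F))).toReal / aff z u x₀ * aff z u x := by
  set v := (aff z u x₀)⁻¹ • (x - x₀) with hv
  set T : EuclideanSpace ℝ (Fin n) →ₗ[ℝ] EuclideanSpace ℝ (Fin n) :=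
    LinearMap.transvection (innerₛₗ ℝ u) v with hT
  have hTa : ∀ y, T y = y + (inner ℝ u y : ℝ) • v := fun y => by
    simp [hT, LinearMap.transvection.apply]
  have hdet : T.det = aff z u x / aff z u x₀ := by
    rw [hT, LinearMap.transvection.det, hv]
    simp only [innerₛₗ_apply_apply, inner_smul_right]
    field_simp
    simp only [aff, inner_sub_right]
    ring
  set b := (- (inner ℝ u z : ℝ) - 1) • v with hb
  have hG : ∀ y, b + T y = y + aff z u y • v := fun y => by
    rw [hTa, hb, aff, inner_sub_right]; module
  have himg : (fun y => b + y) '' (T '' (convexHull ℝ (insert x₀ F))) = convexHull ℝ (insert x F) := by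
    have e1 : (fun y => b + y) '' (T '' (convexHull ℝ (insert x₀ F))) =
        b +ᵥ convexHull ℝ (T '' (insert x₀ F)) := by
      rw [LinearMap.image_convexHull]; rfl
    rw [e1, ← convexHull_vadd]
    congr 1
    have e2 : b +ᵥ (T '' (insert x₀ F)) = (fun y => y + aff z u y • v) '' (insert x₀ F) := by
      change (fun y => b + y) '' (T '' (insert x₀ F)) = _
      rw [Set.image_image]
      exact Set.image_congr fun y _ => hG y
    rw [e2, Set.image_insert_eq]
    have e3 : x₀ + aff z u x₀ • v = x := by
      rw [hv, smul_smul, mul_inv_cancel₀ h0.ne', one_smul]; abel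
    rw [e3]
    congr 1
    calc _ = (fun y => y) '' F := Set.image_congr fun y hy => by simp [hF y hy]
      _ = F := Set.image_id' _
  rw [← himg]
  have : volume ((fun y => b + y) '' (T '' (convexHull ℝ (insert x₀ F)))) =
      ENNReal.ofReal |T.det| * volume (convexHull ℝ (insert x₀ F)) := by
    rw [Set.image_add_left, measure_preimage_add, Measure.addHaar_image_linearMap]
  rw [this, ENNReal.toReal_mul, hdet, ENNReal.toReal_ofReal (abs_nonneg _), abs_of_pos (by positivity)]
  ring

theorem cone_const {n : ℕ} (z u : EuclideanSpace ℝ (Fin n))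
    (F : Set (EuclideanSpace ℝ (Fin n))) (hF : ∀ p ∈ F, aff z u p = 0) :
    ∃ c : ℝ, 0 ≤ c ∧ ∀ x, 0 < aff z u x →
      (volume (convexHull ℝ (insert x F))).toReal = c * aff z u x := by
  by_cases h : ∃ x₀, 0 < aff z u x₀
  · obtain ⟨x₀, h0⟩ := h
    exact ⟨_, by positivity, fun x hx => cone_scale z u x x₀ F hF h0 hx⟩
  · exact ⟨0, le_rfl, fun x hx => (h ⟨x, hx⟩).elim⟩

theorem hull_eq {n : ℕ} (z : EuclideanSpace ℝ (Fin n)) (U : Finset (EuclideanSpace ℝ (Fin n)))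
    (P : Set (EuclideanSpace ℝ (Fin n))) (hP : P = {x | ∀ u ∈ U, aff z u x ≤ 0})
    (hco : Convex ℝ P) (hne : P.Nonempty)
    (x : EuclideanSpace ℝ (Fin n)) :
    convexHull ℝ (P ∪ {x}) = P ∪ ⋃ u ∈ U.filter (fun u => 0 < aff z u x),
      convexHull ℝ (insert x (P ∩ {y | aff z u y = 0})) := by
  have hmem : ∀ y, y ∈ P ↔ ∀ u ∈ U, aff z u y ≤ 0 := fun y => by rw [hP]; rfl
  rw [Set.union_singleton]
  apply Set.Subset.antisymm
  · intro y hy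
    by_cases hyP : y ∈ P
    · exact Or.inl hyP
    right
    have hex : ∃ p ∈ P, ∃ s : ℝ, 0 ≤ s ∧ s ≤ 1 ∧ y = x + s • (p - x) := by
      rcases cone_mem hco hy with rfl | h
      · obtain ⟨p, hp⟩ := hne
        exact ⟨p, hp, 0, le_rfl, zero_le_one, by simp⟩
      · exact h
    obtain ⟨p, hp, s, hs0, hs1, rfl⟩ := hex
    have hxP : x ∉ P := fun hx => hyP (hco.add_smul_sub_mem hx hp ⟨hs0, hs1⟩)
    have hV : (U.filter (fun u => 0 < aff z u x)).Nonempty := by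
      rw [hmem] at hxP
      push Not at hxP
      obtain ⟨u, hu, h⟩ := hxP
      exact ⟨u, Finset.mem_filter.2 ⟨hu, h⟩⟩
    obtain ⟨u, hu, hmax⟩ := Finset.exists_max_image _
      (fun u => aff z u x / (aff z u x - aff z u p)) hV
    have hu' := Finset.mem_filter.1 hu
    set t := aff z u x / (aff z u x - aff z u p) with ht
    have hup := (hmem p).1 hp u hu'.1
    have hden : 0 < aff z u x - aff z u p := by linarith [hu'.2]
    have ht0 : 0 < t := div_pos hu'.2 hden
    have ht1 : t ≤ 1 := by rw [ht, div_le_one hden]; linarith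
    have hq0 : aff z u (x + t • (p - x)) = 0 := by
      rw [aff_comb, ht]; field_simp; ring
    have hqP : x + t • (p - x) ∈ P := by
      rw [hmem]
      intro v hv
      rw [aff_comb]
      have hvp := (hmem p).1 hp v hv
      by_cases hvx : 0 < aff z v x
      · have := hmax v (Finset.mem_filter.2 ⟨hv, hvx⟩)
        have hd : 0 < aff z v x - aff z v p := by linarith
        rw [div_le_iff₀ hd] at this
        linarith
      · push Not at hvx
        nlinarith
    have hst : s ≤ t := by
      by_contra hst
      push Not at hst
      apply hyP
      have h1t : 0 < 1 - t := by linarith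
      have := hco.add_smul_sub_mem hqP hp (t := (s - t) / (1 - t))
        ⟨div_nonneg (by linarith) h1t.le, by rw [div_le_one h1t]; linarith⟩
      convert this using 1
      have e : s = t + (s - t) / (1 - t) * (1 - t) := by field_simp; ring
      nth_rw 1 [e]
      module
    refine Set.mem_biUnion (x := u) hu ?_
    have := cone_mem' (x := x) (F := P ∩ {y | aff z u y = 0}) ⟨hqP, hq0⟩ (s := s / t)
      (by positivity) (by rw [div_le_one ht0]; exact hst)
    convert this using 1
    rw [add_sub_cancel_left, smul_smul, div_mul_cancel₀ _ ht0.ne']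
  · refine Set.union_subset ((Set.subset_insert _ _).trans (subset_convexHull ℝ _)) ?_
    refine Set.iUnion₂_subset fun u _ => convexHull_mono ?_
    exact Set.insert_subset_insert Set.inter_subset_left

theorem vol_formula {n : ℕ} (z : EuclideanSpace ℝ (Fin n)) (U : Finset (EuclideanSpace ℝ (Fin n)))
    (P : Set (EuclideanSpace ℝ (Fin n))) (hP : P = {x | ∀ u ∈ U, aff z u x ≤ 0})
    (hco : Convex ℝ P) (hcpt : IsCompact P) (hne : P.Nonempty)
    (x : EuclideanSpace ℝ (Fin n)) :
    (volume (convexHull ℝ (P ∪ {x}))).toReal = (volume P).toReal +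
      ∑ u ∈ U.filter (fun u => 0 < aff z u x),
      (volume (convexHull ℝ (insert x (P ∩ {y | aff z u y = 0})))).toReal := by
  have hmem : ∀ y, y ∈ P ↔ ∀ u ∈ U, aff z u y ≤ 0 := fun y => by rw [hP]; rfl
  have hFco : ∀ u, Convex ℝ (P ∩ {y | aff z u y = 0}) := by
    intro u
    refine hco.inter ?_
    intro p hp q hq a b ha hb hab
    have e : a • p + b • q = p + b • (q - p) := by
      have : a = 1 - b := by linarith
      subst this; module
    change aff z u _ = 0
    rw [e, aff_comb, hp, hq]; ring
  have hFcl : ∀ u, IsCompact (P ∩ {y | aff z u y = 0}) := fun u =>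
    hcpt.inter_right (isClosed_eq (aff_cont z u) continuous_const)
  have hCcpt : ∀ u, IsCompact (convexHull ℝ (insert x (P ∩ {y | aff z u y = 0}))) := by
    intro u
    have e : convexHull ℝ (insert x (P ∩ {y | aff z u y = 0})) =
        {x} ∪ (fun q : ℝ × EuclideanSpace ℝ (Fin n) => x + q.1 • (q.2 - x)) ''
          (Set.Icc 0 1 ×ˢ (P ∩ {y | aff z u y = 0})) := by
      apply Set.Subset.antisymm
      · intro y hy
        rcases cone_mem (hFco u) hy with h | ⟨p, hp, s, hs0, hs1, h⟩
        · exact Or.inl h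
        · exact Or.inr ⟨(s, p), ⟨⟨hs0, hs1⟩, hp⟩, h.symm⟩
      · rintro y (hy | ⟨⟨s, p⟩, ⟨hs, hp⟩, rfl⟩)
        · rw [Set.mem_singleton_iff.1 hy]
          exact subset_convexHull ℝ _ (Set.mem_insert _ _)
        · exact cone_mem' hp hs.1 hs.2
    rw [e]
    exact isCompact_singleton.union ((isCompact_Icc.prod (hFcl u)).image (by fun_prop))
  have hnull : ∀ u, volume {y | aff z u y = 0} = 0 := by
    intro u
    have : {y | aff z u y = 0} = {y | inner ℝ u y = 1 + inner ℝ u z} := by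
      ext y; simp only [aff, Set.mem_ofPred_eq, inner_sub_right]
      constructor <;> intro h <;> linarith
    rw [this]
    apply hyper_null
    by_cases hu : u = 0
    · right; simp [hu]
    · left; exact hu
  have hdisj : Set.Pairwise (↑(U.filter (fun u => 0 < aff z u x)))
      (Function.onFun (AEDisjoint volume)
        fun u => convexHull ℝ (insert x (P ∩ {y | aff z u y = 0}))) := by
    intro u hu v hv huv
    have hu' := Finset.mem_filter.1 (Finset.mem_coe.1 hu)
    have hv' := Finset.mem_filter.1 (Finset.mem_coe.1 hv)
    have hux := hu'.2
    have hvx := hv'.2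
    have hsub : convexHull ℝ (insert x (P ∩ {y | aff z u y = 0})) ∩
        convexHull ℝ (insert x (P ∩ {y | aff z v y = 0})) ⊆
        {y | aff z v x * aff z u y = aff z u x * aff z v y} := by
      rintro y ⟨h1, h2⟩
      change aff z v x * aff z u y = aff z u x * aff z v y
      rcases cone_mem (hFco u) h1 with rfl | ⟨p, ⟨hp, hp0⟩, s, hs0, hs1, rfl⟩
      · ring
      rcases cone_mem (hFco v) h2 with h | ⟨q, ⟨hq, hq0⟩, t, ht0, ht1, h⟩
      · rw [h]; ring
      have e1 := aff_comb z u x p s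
      have e2 := aff_comb z v x q t
      have e3 := aff_comb z u x q t
      have e4 := aff_comb z v x p s
      rw [← h] at e2 e3
      change aff z u p = 0 at hp0
      change aff z v q = 0 at hq0
      rw [hp0] at e1
      rw [hq0] at e2
      have hqu := (hmem q).1 hq u hu'.1
      have hpv := (hmem p).1 hp v hv'.1
      have i1 : (1 - s) ≤ 1 - t := by
        have : (1 - s) * aff z u x ≤ (1 - t) * aff z u x := by nlinarith
        exact le_of_mul_le_mul_right this hux
      have i2 : (1 - t) ≤ 1 - s := by
        have : (1 - t) * aff z v x ≤ (1 - s) * aff z v x := by nlinarith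
        exact le_of_mul_le_mul_right this hvx
      have : s = t := by linarith
      rw [e1, e2, this]; ring
    refine measure_mono_null hsub ?_
    have : {y | aff z v x * aff z u y = aff z u x * aff z v y} =
        {y | inner ℝ (aff z v x • u - aff z u x • v) y =
          inner ℝ (aff z v x • u - aff z u x • v) z + (aff z v x - aff z u x)} := by
      ext y
      simp only [Set.mem_ofPred_eq, inner_sub_left, real_inner_smul_left]
      have e1 : aff z u y = inner ℝ u y - inner ℝ u z - 1 := by rw [aff, inner_sub_right]
      have e2 : aff z v y = inner ℝ v y - inner ℝ v z - 1 := by rw [aff, inner_sub_right]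
      rw [e1, e2]
      constructor <;> intro h <;> linarith
    rw [this]
    apply hyper_null
    by_contra hcon
    push Not at hcon
    obtain ⟨h1, h2⟩ := hcon
    rw [h1, inner_zero_left, zero_add] at h2
    rw [sub_eq_zero.1 h2, ← smul_sub] at h1
    rcases smul_eq_zero.1 h1 with h | h
    · linarith
    · exact huv (sub_eq_zero.1 h)
  have hPd : AEDisjoint volume P (⋃ u ∈ U.filter (fun u => 0 < aff z u x),
      convexHull ℝ (insert x (P ∩ {y | aff z u y = 0}))) := by
    rw [AEDisjoint, Set.inter_iUnion₂]
    refine (measure_biUnion_null_iff (Finset.countable_toSet _)).2 ?_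
    intro u hu
    have hu' := Finset.mem_filter.1 (Finset.mem_coe.1 hu)
    refine measure_mono_null ?_ (hnull u)
    rintro y ⟨hyP, hy⟩
    have h1 := (hmem y).1 hyP u hu'.1
    refine le_antisymm h1 ?_
    rcases cone_mem (hFco u) hy with rfl | ⟨p, ⟨hp, hp0⟩, s, hs0, hs1, rfl⟩
    · exact hu'.2.le
    · change aff z u p = 0 at hp0
      rw [aff_comb, hp0]
      have := mul_nonneg (sub_nonneg.2 hs1) hu'.2.le
      linarith
  have hm : ∀ u, MeasurableSet (convexHull ℝ (insert x (P ∩ {y | aff z u y = 0}))) :=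
    fun u => (hCcpt u).measurableSet
  rw [hull_eq z U P hP hco hne x, measure_union₀
    (Finset.measurableSet_biUnion _ fun u _ => hm u).nullMeasurableSet hPd,
    measure_biUnion_finset₀ hdisj (fun u _ => (hm u).nullMeasurableSet),
    ENNReal.toReal_add hcpt.measure_lt_top.ne ?_, ENNReal.toReal_sum]
  · intro u _; exact (hCcpt u).measure_lt_top.ne
  · exact ENNReal.sum_ne_top.2 fun u _ => (hCcpt u).measure_lt_top.ne

theorem pos_vol {n : ℕ} (P : Set (EuclideanSpace ℝ (Fin n))) (hcpt : IsCompact P)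
    (hint : (interior P).Nonempty) (x : EuclideanSpace ℝ (Fin n)) (hx : x ∉ P)
    (hfin : volume (convexHull ℝ (P ∪ {x})) ≠ ⊤) :
    (volume P).toReal < (volume (convexHull ℝ (P ∪ {x}))).toReal := by
  set H := convexHull ℝ (P ∪ {x}) with hH
  have hPH : P ⊆ H := Set.subset_union_left.trans (subset_convexHull ℝ _)
  have hxH : x ∈ H := subset_convexHull ℝ _ (Or.inr rfl)
  have hcl := (convex_convexHull ℝ (P ∪ {x})).closure_interior_eq_closure_of_nonempty_interior
    (hint.mono (interior_mono hPH))
  have hxc : x ∈ closure (interior H) := by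
    rw [hH, hcl]; exact subset_closure hxH
  obtain ⟨y, hy1, hy2⟩ := mem_closure_iff.1 hxc Pᶜ hcpt.isClosed.isOpen_compl hx
  have hpos : 0 < volume (Pᶜ ∩ interior H) :=
    (hcpt.isClosed.isOpen_compl.inter isOpen_interior).measure_pos volume ⟨y, hy1, hy2⟩
  have hle : volume P + volume (Pᶜ ∩ interior H) ≤ volume H := by
    rw [← measure_union' _ hcpt.measurableSet]
    · exact measure_mono (Set.union_subset hPH (Set.inter_subset_right.trans interior_subset))
    · exact disjoint_compl_right.mono_right Set.inter_subset_left
  apply (ENNReal.toReal_lt_toReal hcpt.measure_lt_top.ne hfin).2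
  exact lt_of_lt_of_le (ENNReal.lt_add_right hcpt.measure_lt_top.ne hpos.ne') hle

theorem stmt17 {n : ℕ} (hn : 2 ≤ n) (P : Set (EuclideanSpace ℝ (Fin n)))
    (hP : ∃ S : Finset (EuclideanSpace ℝ (Fin n)), P = convexHull ℝ (S : Set _))
    (hint : (interior P).Nonempty) (δ : ℝ) (hδ : 0 < δ) :
    ∃ S : Finset (EuclideanSpace ℝ (Fin n)), illum P δ = convexHull ℝ (S : Set _) := by
  classical
  obtain ⟨z, hz⟩ := hint
  obtain ⟨U, hU⟩ := hrep P hP z hz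
  obtain ⟨S, hS⟩ := hP
  have hcpt : IsCompact P := by
    rw [hS]; exact S.finite_toSet.isCompact_convexHull ℝ
  have hco : Convex ℝ P := by rw [hS]; exact convex_convexHull ℝ _
  have hzP : z ∈ P := interior_subset hz
  have hPa : P = {x | ∀ u ∈ U, aff z u x ≤ 0} := by
    rw [hU]; ext x; simp [aff]
  choose c hc0 hc using fun u => cone_const z u (P ∩ {y | aff z u y = 0}) (fun p hp => hp.2)
  set g : EuclideanSpace ℝ (Fin n) → ℝ := fun x => ∑ u ∈ U, c u * max 0 (aff z u x) with hg
  have hf : ∀ x, (volume (convexHull ℝ (P ∪ {x}))).toReal = (volume P).toReal + g x := by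
    intro x
    rw [vol_formula z U P hPa hco hcpt ⟨z, hzP⟩ x, Finset.sum_filter]
    congr 1
    refine Finset.sum_congr rfl fun u _ => ?_
    split_ifs with h
    · rw [hc u x h, max_eq_right h.le]
    · rw [max_eq_left (not_lt.1 h), mul_zero]
  have hill : ∀ x, x ∈ illum P δ ↔ g x ≤ δ := by
    intro x
    change (volume (convexHull ℝ (P ∪ {x}))).toReal ≤ (volume P).toReal + δ ↔ _
    rw [hf x]; simp
  have hgpos : ∀ x, x ∉ P → 0 < g x := by
    intro x hx
    have hfin : volume (convexHull ℝ (P ∪ {x})) ≠ ⊤ := by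
      have : Bornology.IsBounded (convexHull ℝ (P ∪ {x})) :=
        isBounded_convexHull.2 (hcpt.isBounded.union Bornology.isBounded_singleton)
      exact this.measure_lt_top.ne
    have := pos_vol P hcpt ⟨z, hz⟩ x hx hfin
    rw [hf x] at this
    linarith
  have hgc : Continuous g := by
    have := fun u => aff_cont z u
    rw [hg]; fun_prop
  have hbdd : Bornology.IsBounded (illum P δ) := by
    obtain ⟨R, hR0, hR⟩ := hcpt.isBounded.subset_ball_lt 0 z
    have hgz : ∀ y : EuclideanSpace ℝ (Fin n), ∀ s : ℝ, 0 ≤ s → s ≤ 1 →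
        g (z + s • (y - z)) ≤ s * g y := by
      intro y s hs0 hs1
      simp only [hg]
      rw [Finset.mul_sum]
      refine Finset.sum_le_sum fun u _ => ?_
      rw [aff_comb]
      have h1 : aff z u z = -1 := by simp [aff]
      rw [h1, mul_left_comm]
      refine mul_le_mul_of_nonneg_left ?_ (hc0 u)
      apply max_le
      · exact mul_nonneg hs0 (le_max_left _ _)
      · have := mul_le_mul_of_nonneg_left (le_max_right 0 (aff z u y)) hs0
        linarith
    have hm : ∃ m > 0, ∀ y ∈ Metric.sphere z R, m ≤ g y := by
      rcases (Metric.sphere z R).eq_empty_or_nonempty with he | hne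
      · exact ⟨1, one_pos, by simp [he]⟩
      · obtain ⟨y, hy, hmin⟩ := (isCompact_sphere z R).exists_isMinOn hne hgc.continuousOn
        refine ⟨g y, hgpos y fun h => ?_, fun w hw => hmin hw⟩
        have := hR h
        rw [Metric.mem_sphere] at hy
        rw [Metric.mem_ball] at this
        linarith
    obtain ⟨m, hm0, hm⟩ := hm
    refine (Metric.isBounded_closedBall (x := z) (r := max R (R * δ / m))).subset ?_
    intro x hx
    rw [hill] at hx
    rw [mem_closedBall_iff_norm]
    by_contra hcon
    push Not at hcon
    obtain ⟨h1, h2⟩ := max_lt_iff.1 hcon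
    have hxp : 0 < ‖x - z‖ := hR0.trans h1
    have h3 := hgz x (R / ‖x - z‖) (by positivity) (by rw [div_le_one hxp]; exact h1.le)
    have h4 := hm (z + (R / ‖x - z‖) • (x - z)) (by
      rw [mem_sphere_iff_norm, add_sub_cancel_left, norm_smul, Real.norm_of_nonneg (by positivity)]
      field_simp)
    have h5 : m ≤ R / ‖x - z‖ * δ :=
      h4.trans (h3.trans (mul_le_mul_of_nonneg_left hx (by positivity)))
    rw [div_lt_iff₀ hm0] at h2
    rw [div_mul_eq_mul_div, le_div_iff₀ hxp] at h5
    linarith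
  have hpoly : illum P δ = {x | ∀ T : U.powerset, inner ℝ (∑ u ∈ T.1, c u • u) x ≤
      δ + ∑ u ∈ T.1, c u * (inner ℝ u z + 1)} := by
    ext x
    rw [hill]
    have key : ∀ T : Finset (EuclideanSpace ℝ (Fin n)),
        (inner ℝ (∑ u ∈ T, c u • u) x ≤ δ + ∑ u ∈ T, c u * (inner ℝ u z + 1)) ↔
        ∑ u ∈ T, c u * aff z u x ≤ δ := by
      intro T
      rw [← sub_le_iff_le_add, sum_inner, ← Finset.sum_sub_distrib]
      have : ∀ u, inner ℝ (c u • u) x - c u * (inner ℝ u z + 1) = c u * aff z u x := by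
        intro u
        rw [real_inner_smul_left, aff, inner_sub_right]; ring
      simp only [this]
    simp only [Set.mem_ofPred_eq, key]
    constructor
    · intro h T
      refine le_trans ?_ h
      calc _ ≤ ∑ u ∈ T.1, c u * max 0 (aff z u x) := Finset.sum_le_sum fun u _ =>
            mul_le_mul_of_nonneg_left (le_max_right _ _) (hc0 u)
        _ ≤ _ := Finset.sum_le_sum_of_subset_of_nonneg (Finset.mem_powerset.1 T.2)
            fun u _ _ => mul_nonneg (hc0 u) (le_max_left _ _)
    · intro h
      have := h ⟨U.filter (fun u => 0 < aff z u x), Finset.mem_powerset.2 (Finset.filter_subset _ _)⟩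
      refine le_trans (le_of_eq ?_) this
      simp only [hg]
      rw [Finset.sum_filter]
      refine Finset.sum_congr rfl fun u _ => ?_
      split_ifs with h
      · rw [max_eq_right h.le]
      · rw [max_eq_left (not_lt.1 h), mul_zero]
  rw [hpoly] at hbdd ⊢
  exact poly_hull _ _ hbdd
end

section
/- Let P ⊂ ℝ² be a convex k-gon and Q ⊂ ℝ² a convex m-gon such that P is contained in the interior of Q, every vertex of Q belongs to a sideline of P, and every sideline of P intersects the boundary of Q in exactly two points, both of which are vertices of Q. Then m ≥ k, with equality if and only if every vertex of Q lies on exactly two sidelines of P. -/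
open MeasureTheory Set Pointwise Metric

/-- `ℓ` is a sideline of the polygon `P`: the affine line spanned by a side of `P`,
where a side is a one-dimensional face (an extreme segment with distinct endpoints). -/
def IsSideline (P ℓ : Set (EuclideanSpace ℝ (Fin 2))) : Prop :=
  ∃ a b : EuclideanSpace ℝ (Fin 2), a ≠ b ∧ IsExtreme ℝ P (segment ℝ a b) ∧
    ℓ = (affineSpan ℝ {a, b} : Set (EuclideanSpace ℝ (Fin 2)))

namespace Stmt18Aux

abbrev E2 := EuclideanSpace ℝ (Fin 2)

/-- The planar cross product. -/
def cr (u w : E2) : ℝ := u 0 * w 1 - u 1 * w 0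

lemma ext2 {u w : E2} (h0 : u 0 = w 0) (h1 : u 1 = w 1) : u = w := by
  ext i
  fin_cases i
  · exact h0
  · exact h1

lemma sq_pos' {u : E2} (hu : u ≠ 0) : 0 < u 0 ^ 2 + u 1 ^ 2 := by
  by_contra h
  apply hu
  have h0 : u 0 = 0 := by nlinarith [sq_nonneg (u 0), sq_nonneg (u 1)]
  have h1 : u 1 = 0 := by nlinarith [sq_nonneg (u 0), sq_nonneg (u 1)]
  exact ext2 (by simpa using h0) (by simpa using h1)

lemma exists_smul {u w : E2} (hu : u ≠ 0) (h : cr u w = 0) : ∃ t : ℝ, w = t • u := by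
  have hs := sq_pos' hu
  unfold cr at h
  refine ⟨(u 0 * w 0 + u 1 * w 1) / (u 0 ^ 2 + u 1 ^ 2), ext2 ?_ ?_⟩
  · simp only [PiLp.smul_apply, smul_eq_mul]
    field_simp
    linear_combination (-u 1) * h
  · simp only [PiLp.smul_apply, smul_eq_mul]
    field_simp
    linear_combination (u 0) * h

lemma cr_smul_left (t : ℝ) (u w : E2) : cr (t • u) w = t * cr u w := by
  simp [cr]; ring

lemma cr_smul_right (t : ℝ) (u w : E2) : cr u (t • w) = t * cr u w := by
  simp [cr]; ring

lemma cr_swap (u w : E2) : cr u w = - cr w u := by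
  simp [cr]; ring

lemma cr_self (u : E2) : cr u u = 0 := by
  simp [cr]; ring

lemma cr_comb {α β : ℝ} (h : α + β = 1) (u x y v : E2) :
    cr u (α • x + β • y - v) = α * cr u (x - v) + β * cr u (y - v) := by
  obtain rfl : α = 1 - β := by linarith
  simp [cr]; ring

/-- The line through `q` with direction `u`. -/
def ln (q u : E2) : Set E2 := {x | cr u (x - q) = 0}

lemma affineSpan_eq {a b : E2} (hab : a ≠ b) :
    (affineSpan ℝ {a, b} : Set E2) = ln a (b - a) := by
  ext x
  simp only [SetLike.mem_coe, mem_affineSpan_pair_iff_exists_lineMap_eq, ln, mem_ofPred_eq]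
  constructor
  · rintro ⟨r, rfl⟩
    simp [AffineMap.lineMap_apply, cr_smul_right, cr_self]
  · intro h
    obtain ⟨t, ht⟩ := exists_smul (sub_ne_zero.mpr hab.symm) h
    exact ⟨t, by simp [AffineMap.lineMap_apply, ← ht]⟩

lemma ln_eq_of {q u w : E2} (hu : u ≠ 0) (hw : w ≠ 0) (h : cr u w = 0) : ln q u = ln q w := by
  obtain ⟨t, rfl⟩ := exists_smul hu h
  have ht : t ≠ 0 := by rintro rfl; simp at hw
  ext x
  simp [ln, cr_smul_left, ht]

lemma mem_open_neg {a b : E2} {t : ℝ} (ht : t < 0) : a ∈ openSegment ℝ (a + t • (b - a)) b := by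
  have h1 : (0 : ℝ) < 1 - t := by linarith
  refine ⟨1 / (1 - t), -t / (1 - t), by positivity, div_pos (by linarith) h1, by field_simp; ring, ?_⟩
  apply ext2 <;> simp <;> field_simp <;> ring

lemma mem_open_gt {a b : E2} {t : ℝ} (ht : 1 < t) : b ∈ openSegment ℝ (a + t • (b - a)) a := by
  have := @mem_open_neg b a (1 - t) (by linarith)
  convert this using 2
  apply ext2 <;> simp <;> ring

lemma seg_of {a b : E2} {t : ℝ} (h0 : 0 ≤ t) (h1 : t ≤ 1) : a + t • (b - a) ∈ segment ℝ a b := by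
  refine ⟨1 - t, t, by linarith, h0, by ring, ?_⟩
  apply ext2 <;> simp <;> ring

lemma on_seg {P : Set E2} {a b : E2} (hab : a ≠ b) (h : IsExtreme ℝ P (segment ℝ a b))
    {c : E2} (hc : c ∈ P) (hl : cr (b - a) (c - a) = 0) : c ∈ segment ℝ a b := by
  obtain ⟨t, ht⟩ := exists_smul (sub_ne_zero.mpr hab.symm) hl
  have hc' : c = a + t • (b - a) := by rw [← ht]; abel
  rcases lt_or_ge t 0 with h0 | h0
  · exact h.left_mem_of_mem_openSegment hc (h.subset (right_mem_segment ℝ a b))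
      (left_mem_segment ℝ a b) (by rw [hc']; exact mem_open_neg h0)
  rcases lt_or_ge 1 t with h1 | h1
  · exact h.left_mem_of_mem_openSegment hc (h.subset (left_mem_segment ℝ a b))
      (right_mem_segment ℝ a b) (by rw [hc']; exact mem_open_gt h1)
  · rw [hc']; exact seg_of h0 h1

lemma seg_cr {a b c : E2} (h : c ∈ segment ℝ a b) : cr (b - a) (c - a) = 0 := by
  obtain ⟨α, β, _, _, h1, rfl⟩ := h
  rw [cr_comb h1]
  rw [cr_self]
  simp [cr]

lemma supp {P : Set E2} (hP : Convex ℝ P) {a b : E2} (hab : a ≠ b)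
    (h : IsExtreme ℝ P (segment ℝ a b)) :
    ∃ s : ℝ, (s = 1 ∨ s = -1) ∧ ∀ x ∈ P, 0 ≤ s * cr (b - a) (x - a) := by
  by_contra hcon
  push Not at hcon
  obtain ⟨y, hy, hy'⟩ := hcon 1 (Or.inl rfl)
  obtain ⟨x, hx, hx'⟩ := hcon (-1) (Or.inr rfl)
  set X := cr (b - a) (x - a) with hX
  set Y := cr (b - a) (y - a) with hY
  have hXp : 0 < X := by linarith
  have hYn : Y < 0 := by linarith
  have hd : 0 < X - Y := by linarith
  have h1 : -Y / (X - Y) + X / (X - Y) = 1 := by field_simp; ring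
  have ha : 0 < -Y / (X - Y) := div_pos (by linarith) hd
  have hb : 0 < X / (X - Y) := div_pos hXp hd
  have hz : (-Y / (X - Y)) • x + (X / (X - Y)) • y ∈ segment ℝ a b := by
    apply on_seg hab h (hP hx hy ha.le hb.le h1)
    rw [cr_comb h1, ← hX, ← hY]
    field_simp; ring
  have := seg_cr (h.left_mem_of_mem_openSegment hx hy hz ⟨_, _, ha, hb, h1, rfl⟩)
  linarith

lemma cr_base {d q a x : E2} (h : cr d (q - a) = 0) : cr d (x - a) = cr d (x - q) := by
  simp [cr] at *; linarith

/-- Description of a sideline through `q`. -/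
lemma through {P : Set E2} (hP : Convex ℝ P) {l : Set E2} (hl : IsSideline P l) {q : E2}
    (hq : q ∈ l) : ∃ (u : E2) (s : ℝ), u ≠ 0 ∧ q + u ∈ P ∧ (s = 1 ∨ s = -1) ∧ l = ln q u ∧
      ∀ x ∈ P, 0 ≤ s * cr u (x - q) := by
  obtain ⟨a, b, hab, he, rfl⟩ := hl
  rw [affineSpan_eq hab] at hq ⊢
  obtain ⟨s, hs, hx⟩ := supp hP hab he
  have hd : b - a ≠ 0 := sub_ne_zero.mpr hab.symm
  obtain ⟨p, hp, hpl, hpq⟩ : ∃ p ∈ P, cr (b - a) (p - a) = 0 ∧ p ≠ q := by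
    by_cases haq : a = q
    · exact ⟨b, he.subset (right_mem_segment ℝ a b), cr_self _, fun h => hab (haq.trans h.symm)⟩
    · exact ⟨a, he.subset (left_mem_segment ℝ a b), by simp [cr], haq⟩
  have hu : p - q ≠ 0 := sub_ne_zero.mpr hpq
  have hc : cr (b - a) (p - q) = 0 := by rw [← cr_base hq]; exact hpl
  have hl : ln a (b - a) = ln q (b - a) := by
    ext x; simp only [ln, mem_ofPred_eq]; rw [cr_base hq]
  rw [hl, ln_eq_of hd hu hc]
  obtain ⟨t, ht⟩ := exists_smul hu (show cr (p - q) (b - a) = 0 by rw [cr_swap, hc, neg_zero])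
  have ht0 : t ≠ 0 := by rintro rfl; rw [zero_smul] at ht; exact hd ht
  have key : ∀ x ∈ P, 0 ≤ s * (t * cr (p - q) (x - q)) := by
    intro x hxP
    have := hx x hxP
    rwa [cr_base hq, ht, cr_smul_left] at this
  rcases lt_or_gt_of_ne ht0 with h | h
  · refine ⟨p - q, -s, hu, by simpa using hp, by rcases hs with rfl | rfl <;> simp, rfl, ?_⟩
    intro x hxP
    have := key x hxP
    by_contra hc
    nlinarith
  · refine ⟨p - q, s, hu, by simpa using hp, hs, rfl, ?_⟩
    intro x hxP
    have := key x hxP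
    by_contra hc
    nlinarith

lemma at_most_two {P : Set E2} (hP : Convex ℝ P) {l₁ l₂ l₃ : Set E2} (h₁ : IsSideline P l₁)
    (h₂ : IsSideline P l₂) (h₃ : IsSideline P l₃) {q : E2} (q₁ : q ∈ l₁) (q₂ : q ∈ l₂)
    (q₃ : q ∈ l₃) (h12 : l₁ ≠ l₂) (h13 : l₁ ≠ l₃) (h23 : l₂ ≠ l₃) : False := by
  obtain ⟨u₁, s₁, hu₁, hp₁, hs₁, rfl, k₁⟩ := through hP h₁ q₁
  obtain ⟨u₂, s₂, hu₂, hp₂, hs₂, rfl, k₂⟩ := through hP h₂ q₂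
  obtain ⟨u₃, s₃, hu₃, hp₃, hs₃, rfl, k₃⟩ := through hP h₃ q₃
  have key : ∀ (u w : E2) (s : ℝ), u ≠ 0 → w ≠ 0 → (s = 1 ∨ s = -1) → ln q u ≠ ln q w →
      q + u ∈ P → q + w ∈ P → (∀ x ∈ P, 0 ≤ s * cr u (x - q)) → (∀ x ∈ P, 0 ≤ s * cr w (x - q)) →
      False := by
    intro u w s hu hw hs hne hpu hpw hku hkw
    have e1 := hku _ hpw
    have e2 := hkw _ hpu
    rw [add_sub_cancel_left] at e1 e2
    rw [cr_swap w u] at e2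
    refine hne (ln_eq_of hu hw ?_)
    rcases hs with rfl | rfl <;> linarith
  by_cases e12 : s₁ = s₂
  · subst e12; exact key u₁ u₂ s₁ hu₁ hu₂ hs₁ h12 hp₁ hp₂ k₁ k₂
  by_cases e13 : s₁ = s₃
  · subst e13; exact key u₁ u₃ s₁ hu₁ hu₃ hs₁ h13 hp₁ hp₃ k₁ k₃
  by_cases e23 : s₂ = s₃
  · subst e23; exact key u₂ u₃ s₂ hu₂ hu₃ hs₂ h23 hp₂ hp₃ k₂ k₃
  rcases hs₁ with rfl | rfl <;> rcases hs₂ with rfl | rfl <;> rcases hs₃ with rfl | rfl <;> simp_all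

lemma interior_ne {P : Set E2} (hP : (interior P).Nonempty) {u : E2} (hu : u ≠ 0) (v : E2) :
    ∃ x ∈ P, cr u (x - v) ≠ 0 := by
  obtain ⟨o, ho⟩ := hP
  by_contra! hcon
  set n : E2 := !₂[-u 1, u 0] with hn
  have hc : Continuous fun t : ℝ => o + t • n := by fun_prop
  have hopen : IsOpen ((fun t : ℝ => o + t • n) ⁻¹' interior P) := isOpen_interior.preimage hc
  obtain ⟨ε, hε, hb⟩ := Metric.isOpen_iff.mp hopen 0 (by simpa using ho)
  have h1 := hcon o (interior_subset ho)
  have h2 := hcon (o + (ε / 2) • n) (interior_subset (hb (by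
    simp [Metric.mem_ball, abs_of_pos hε]; linarith)))
  have h3 := sq_pos' hu
  simp [cr, hn] at h1 h2
  nlinarith

lemma ext_frontier {Q : Set E2} {q : E2} (hq : q ∈ Set.extremePoints ℝ Q) : q ∈ frontier Q := by
  refine ⟨subset_closure hq.1, fun h => ?_⟩
  set n : E2 := !₂[1, 0] with hn
  have hc : Continuous fun t : ℝ => q + t • n := by fun_prop
  have hopen : IsOpen ((fun t : ℝ => q + t • n) ⁻¹' interior Q) := isOpen_interior.preimage hc
  obtain ⟨ε, hε, hb⟩ := Metric.isOpen_iff.mp hopen 0 (by simpa using h)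
  have h1 : q + (ε / 2) • n ∈ Q := interior_subset (hb (by
    simp [Metric.mem_ball, abs_of_pos hε]; linarith))
  have h2 : q + (-(ε / 2)) • n ∈ Q := interior_subset (hb (by
    simp [Metric.mem_ball, abs_of_pos hε]; linarith))
  have h3 := hq.2 h1 h2 ⟨1 / 2, 1 / 2, by norm_num, by norm_num, by norm_num, by
    apply ext2 <;> simp <;> ring⟩
  have h4 := congrArg (fun x : E2 => x 0) h3
  simp [hn] at h4
  linarith

lemma end_extreme {P : Set E2} {a b : E2} (h : IsExtreme ℝ P (segment ℝ a b)) :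
    a ∈ Set.extremePoints ℝ P := by
  refine h.extremePoints_subset_extremePoints ⟨left_mem_segment ℝ a b, ?_⟩
  rintro x ⟨α, β, hα, hβ, hs, rfl⟩ y ⟨γ, δ, hγ, hδ, hs', rfl⟩ ⟨p, r, hp, hr, hpr, he⟩
  by_cases hab : a = b
  · subst hab; rw [← add_smul, hs, one_smul]
  · have hd := sub_ne_zero.mpr (Ne.symm hab)
    have : (p * β + r * δ) • (b - a) = 0 := by
      obtain rfl : α = 1 - β := by linarith
      obtain rfl : γ = 1 - δ := by linarith
      obtain rfl : p = 1 - r := by linarith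
      have e0 := congrArg (fun x : E2 => x 0) he
      have e1 := congrArg (fun x : E2 => x 1) he
      simp at e0 e1
      apply ext2 <;> simp only [PiLp.smul_apply, PiLp.sub_apply, smul_eq_mul, PiLp.zero_apply]
      · linear_combination e0
      · linear_combination e1
    rcases smul_eq_zero.mp this with h0 | h0
    · have hβ0 : β = 0 := by
        have := mul_nonneg hp.le hβ
        have := mul_nonneg hr.le hδ
        have : p * β = 0 := by linarith
        rcases mul_eq_zero.mp this with h | h
        · linarith
        · exact h
      subst hβ0
      obtain rfl : α = 1 := by linarith
      simp
    · exact absurd h0 hd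

lemma two_vertices {P : Set E2} {l : Set E2} (hl : IsSideline P l) :
    ∃ a b, a ≠ b ∧ Set.extremePoints ℝ P ∩ l = {a, b} ∧
      l = (affineSpan ℝ {a, b} : Set E2) := by
  obtain ⟨a, b, hab, he, rfl⟩ := hl
  refine ⟨a, b, hab, ?_, rfl⟩
  rw [affineSpan_eq hab]
  have hb : b ∈ Set.extremePoints ℝ P := end_extreme (by rwa [segment_symm])
  have ha := end_extreme he
  ext x
  constructor
  · rintro ⟨hx, hxl⟩
    have hs := on_seg hab he hx.1 hxl
    have hm := (mem_extremePoints_iff_forall_segment.mp hx).2 _ ha.1 _ hb.1 hs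
    rcases hm with h | h
    · exact Or.inl h.symm
    · exact Or.inr h.symm
  · rintro (rfl | rfl)
    · exact ⟨ha, by simp [ln, cr]⟩
    · exact ⟨hb, cr_self _⟩

lemma sidelines_finite {P : Set E2} (hf : (Set.extremePoints ℝ P).Finite) :
    {l | IsSideline P l}.Finite := by
  refine ((hf.prod hf).image fun p : E2 × E2 => (affineSpan ℝ {p.1, p.2} : Set E2)).subset ?_
  rintro l ⟨a, b, hab, he, rfl⟩
  exact ⟨(a, b), ⟨end_extreme he, end_extreme (by rwa [segment_symm])⟩, rfl⟩

lemma hull {P : Set E2} (hP : IsConvexBody P) (hf : (Set.extremePoints ℝ P).Finite) :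
    P = convexHull ℝ (Set.extremePoints ℝ P) := by
  rw [← hf.isClosed_convexHull (𝕜 := ℝ) |>.closure_eq]
  exact (closure_convexHull_extremePoints hP.1 hP.2.1).symm

/-- A supporting segment joining two vertices is a side. -/
lemma side_of {P : Set E2} {v w : E2} (hvw : v ≠ w) (hv : v ∈ Set.extremePoints ℝ P)
    (hw : w ∈ Set.extremePoints ℝ P) (hP : Convex ℝ P) (s : ℝ) (hs : s ≠ 0)
    (h : ∀ x ∈ P, 0 ≤ s * cr (w - v) (x - v)) : IsSideline P (ln v (w - v)) := by
  refine ⟨v, w, hvw, ⟨hP.segment_subset hv.1 hw.1, ?_⟩, (affineSpan_eq hvw).symm⟩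
  rintro x hx y hy z hz ⟨α, β, hα, hβ, hs1, rfl⟩
  have hz0 := seg_cr hz
  rw [cr_comb hs1] at hz0
  have hx0 := h x hx
  have hy0 := h y hy
  have hX : cr (w - v) (x - v) = 0 := by
    have e1 := mul_nonneg hα.le hx0
    have e2 := mul_nonneg hβ.le hy0
    have e3 : α * (s * cr (w - v) (x - v)) + β * (s * cr (w - v) (y - v)) = 0 := by
      linear_combination s * hz0
    have e4 : α * (s * cr (w - v) (x - v)) = 0 := by linarith
    simpa [hα.ne', hs] using e4
  obtain ⟨t, ht⟩ := exists_smul (sub_ne_zero.mpr hvw.symm) hX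
  have hx' : x = v + t • (w - v) := by rw [← ht]; abel
  rcases lt_or_ge t 0 with h0 | h0
  · have := hv.2 hx hw.1 (by rw [hx']; exact mem_open_neg h0)
    rw [this]; exact left_mem_segment ℝ v w
  rcases lt_or_ge 1 t with h1 | h1
  · have := hw.2 hx hv.1 (by rw [hx']; exact mem_open_gt h1)
    rw [this]; exact right_mem_segment ℝ v w
  · rw [hx']; exact seg_of h0 h1

lemma clm_eq (f : E2 →L[ℝ] ℝ) : ∃ p r : ℝ, ∀ x : E2, f x = p * x 0 + r * x 1 := by
  refine ⟨f !₂[1, 0], f !₂[0, 1], fun x => ?_⟩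
  have : x = x 0 • !₂[(1 : ℝ), 0] + x 1 • !₂[(0 : ℝ), 1] := by
    apply ext2 <;> simp
  conv_lhs => rw [this]
  rw [map_add, map_smul, map_smul]
  simp [mul_comm]

lemma extend {P : Set E2} (hP : IsConvexBody P) (hf : (Set.extremePoints ℝ P).Finite) (u v : E2)
    (h : ∀ x ∈ Set.extremePoints ℝ P, 0 ≤ cr u (x - v)) : ∀ x ∈ P, 0 ≤ cr u (x - v) := by
  have hc : Convex ℝ {x : E2 | 0 ≤ cr u (x - v)} := by
    intro x hx y hy α β hα hβ hs
    simp only [mem_ofPred_eq] at *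
    rw [cr_comb hs]
    positivity
  intro x hx
  rw [hull hP hf] at hx
  exact convexHull_min h hc hx

lemma exists_two {P : Set E2} (hP : IsConvexBody P) (hf : (Set.extremePoints ℝ P).Finite)
    {v : E2} (hv : v ∈ Set.extremePoints ℝ P) :
    ∃ l₁ l₂, l₁ ≠ l₂ ∧ IsSideline P l₁ ∧ IsSideline P l₂ ∧ v ∈ l₁ ∧ v ∈ l₂ := by
  set W := Set.extremePoints ℝ P \ {v} with hW
  have hWf : W.Finite := hf.subset sdiff_subset
  have hvW : v ∉ convexHull ℝ W := by
    have := (hP.2.1.mem_extremePoints_iff_mem_sdiff_convexHull_sdiff.mp hv).2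
    exact fun h => this (convexHull_mono (sdiff_subset_sdiff_left extremePoints_subset) h)
  obtain ⟨f, c, hfv, hfW⟩ := geometric_hahn_banach_point_closed (convex_convexHull ℝ W)
    (hWf.isClosed_convexHull (𝕜 := ℝ)) hvW
  obtain ⟨p, r, hpr⟩ := clm_eq f
  have hpos : ∀ w ∈ W, 0 < p * (w - v) 0 + r * (w - v) 1 := by
    intro w hw
    have := hfW w (subset_convexHull ℝ W hw)
    rw [hpr] at this hfv
    simp; linarith
  have hWne : W.Nonempty := by
    by_contra hne
    rw [not_nonempty_iff_eq_empty] at hne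
    have hu : (!₂[(1 : ℝ), 0] : E2) ≠ 0 := by
      intro h
      have := congrArg (fun x : E2 => x 0) h
      simp at this
    obtain ⟨x, hx, hx'⟩ := interior_ne hP.2.2 hu v
    rw [hull hP hf] at hx
    have : Set.extremePoints ℝ P ⊆ {v} := sdiff_eq_empty.mp hne
    have := convexHull_mono (𝕜 := ℝ) this hx
    rw [convexHull_singleton] at this
    obtain rfl : x = v := this
    simp [cr] at hx'
  let g : E2 → ℝ := fun w =>
    (-r * (w - v) 0 + p * (w - v) 1) / (p * (w - v) 0 + r * (w - v) 1)
  have hN : 0 < p ^ 2 + r ^ 2 := by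
    obtain ⟨w, hw⟩ := hWne
    have := hpos w hw
    by_contra hc
    have hp0 : p = 0 := by nlinarith [sq_nonneg p, sq_nonneg r]
    have hr0 : r = 0 := by nlinarith [sq_nonneg p, sq_nonneg r]
    subst hp0 hr0
    simp at this
  have hcmp : ∀ w ∈ W, ∀ x ∈ W, g w ≤ g x → 0 ≤ cr (w - v) (x - v) := by
    intro w hw x hx hle
    have hw' := hpos w hw
    have hx' := hpos x hx
    have := (div_le_div_iff₀ hw' hx').mp hle
    have h2 : 0 ≤ (p ^ 2 + r ^ 2) * cr (w - v) (x - v) := by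
      unfold cr
      linarith
    exact nonneg_of_mul_nonneg_right h2 hN
  obtain ⟨w₁, hw₁, hmin⟩ := hWf.exists_minimalFor g W hWne |> fun ⟨i, hi⟩ =>
    (⟨i, hi.1, fun x hx => (le_total (g i) (g x)).elim id fun h => hi.2 hx h⟩ :
      ∃ i, i ∈ W ∧ ∀ x ∈ W, g i ≤ g x)
  obtain ⟨w₂, hw₂, hmax⟩ := hWf.exists_maximalFor g W hWne |> fun ⟨i, hi⟩ =>
    (⟨i, hi.1, fun x hx => (le_total (g x) (g i)).elim id fun h => hi.2 hx h⟩ :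
      ∃ i, i ∈ W ∧ ∀ x ∈ W, g x ≤ g i)
  have k₁ : ∀ x ∈ P, 0 ≤ cr (w₁ - v) (x - v) := by
    apply extend hP hf
    intro x hx
    by_cases hxv : x = v
    · subst hxv; simp [cr]
    · exact hcmp _ hw₁ _ ⟨hx, hxv⟩ (hmin x ⟨hx, hxv⟩)
  have k₂ : ∀ x ∈ P, 0 ≤ cr ((-1 : ℝ) • (w₂ - v)) (x - v) := by
    apply extend hP hf
    intro x hx
    by_cases hxv : x = v
    · subst hxv; simp [cr]
    · have := hcmp _ ⟨hx, hxv⟩ _ hw₂ (hmax x ⟨hx, hxv⟩)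
      rw [cr_smul_left, cr_swap]
      linarith
  have n₁ : v ≠ w₁ := fun h => hw₁.2 h.symm
  have n₂ : v ≠ w₂ := fun h => hw₂.2 h.symm
  refine ⟨ln v (w₁ - v), ln v (w₂ - v), ?_, ?_, ?_, by simp [ln, cr], by simp [ln, cr]⟩
  · intro heq
    have hm : w₂ ∈ ln v (w₁ - v) := by rw [heq]; exact cr_self _
    have hd := sub_ne_zero.mpr n₁.symm
    obtain ⟨t, ht⟩ := exists_smul hd hm
    have ht0 : 0 < t := by
      have h2 := hpos _ hw₂
      have h1 := hpos _ hw₁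
      rw [ht] at h2
      have : 0 < t * (p * (w₁ - v) 0 + r * (w₁ - v) 1) := by
        simp only [PiLp.smul_apply, smul_eq_mul] at h2
        linarith
      exact pos_of_mul_pos_left this h1.le
    obtain ⟨x, hx, hx'⟩ := interior_ne hP.2.2 hd v
    have e1 := k₁ x hx
    have e2 := k₂ x hx
    rw [cr_smul_left, ht, cr_smul_left] at e2
    apply hx'
    by_contra hne
    have : 0 < cr (w₁ - v) (x - v) := lt_of_le_of_ne e1 (Ne.symm hne)
    have := mul_pos ht0 this
    linarith
  · exact side_of n₁ hv hw₁.1 hP.2.1 1 one_ne_zero (by simpa using k₁)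
  · refine side_of n₂ hv hw₂.1 hP.2.1 (-1) (by norm_num) fun x hx => ?_
    have := k₂ x hx
    rwa [cr_smul_left] at this

lemma count {α : Type*} {S : Set (Set α)} {X : Set α} (hS : S.Finite) (hX : X.Finite)
    (h : ∀ l ∈ S, (X ∩ l).ncard = 2) :
    ∑ x ∈ hX.toFinset, {l | l ∈ S ∧ x ∈ l}.ncard = 2 * S.ncard := by
  classical
  have := Finset.sum_card_bipartiteAbove_eq_sum_card_bipartiteBelow (s := hX.toFinset)
    (t := hS.toFinset) (fun (x : α) (l : Set α) => x ∈ l)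
  have e1 : ∀ x, {l | l ∈ S ∧ x ∈ l}.ncard =
      (hS.toFinset.bipartiteAbove (fun (x : α) (l : Set α) => x ∈ l) x).card := by
    intro x
    rw [← Set.ncard_coe_finset]
    congr 1
    ext l
    simp [Finset.bipartiteAbove]
  have e2 : ∀ l ∈ hS.toFinset,
      (hX.toFinset.bipartiteBelow (fun (x : α) (l : Set α) => x ∈ l) l).card = 2 := by
    intro l hl
    rw [← h l (by simpa using hl), ← Set.ncard_coe_finset]
    congr 1
    ext x
    simp [Finset.bipartiteBelow]
  rw [Finset.sum_congr rfl fun x _ => e1 x, this, Finset.sum_congr rfl e2,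
    Finset.sum_const, smul_eq_mul, mul_comm, Set.ncard_eq_toFinset_card S hS]

lemma le_two {P : Set E2} (hP : Convex ℝ P) (hf : (Set.extremePoints ℝ P).Finite) (q : E2) :
    {l | IsSideline P l ∧ q ∈ l}.ncard ≤ 2 := by
  by_contra hc
  push Not at hc
  obtain ⟨a, b, c, ha, hb, hc, hab, hac, hbc⟩ :=
    (Set.two_lt_ncard_iff ((sidelines_finite hf).subset fun l hl => hl.1)).mp hc
  exact at_most_two hP ha.1 hb.1 hc.1 ha.2 hb.2 hc.2 hab hac hbc

lemma sidelines_card {P : Set E2} (hP : IsConvexBody P) (hf : (Set.extremePoints ℝ P).Finite) :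
    {l | IsSideline P l}.ncard = (Set.extremePoints ℝ P).ncard := by
  have h := count (sidelines_finite hf) hf fun l hl => by
    obtain ⟨a, b, hab, he, -⟩ := two_vertices hl
    rw [he, Set.ncard_pair hab]
  have h2 : ∀ x ∈ hf.toFinset, {l | l ∈ {l | IsSideline P l} ∧ x ∈ l}.ncard = 2 := by
    intro x hx
    apply le_antisymm (le_two hP.2.1 hf x)
    obtain ⟨l₁, l₂, hne, h1, h2, m1, m2⟩ := exists_two hP hf (by simpa using hx)
    refine (Set.ncard_pair hne).symm.le.trans ?_
    refine Set.ncard_le_ncard ?_ ((sidelines_finite hf).subset fun l hl => hl.1)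
    rintro l (rfl | rfl)
    · exact ⟨h1, m1⟩
    · exact ⟨h2, m2⟩
  rw [Finset.sum_congr rfl h2, Finset.sum_const, smul_eq_mul,
    ← Set.ncard_eq_toFinset_card _ hf] at h
  omega

end Stmt18Aux

theorem stmt18 (P Q : Set (EuclideanSpace ℝ (Fin 2))) (k m : ℕ)
    (hP : IsConvexBody P) (hQ : IsConvexBody Q)
    (hPfin : (Set.extremePoints ℝ P).Finite) (hk : (Set.extremePoints ℝ P).ncard = k)
    (hQfin : (Set.extremePoints ℝ Q).Finite) (hm : (Set.extremePoints ℝ Q).ncard = m)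
    (hPQ : P ⊆ interior Q)
    (hvert : ∀ q ∈ Set.extremePoints ℝ Q, ∃ ℓ, IsSideline P ℓ ∧ q ∈ ℓ)
    (hside : ∀ ℓ, IsSideline P ℓ → ∃ a b : EuclideanSpace ℝ (Fin 2), a ≠ b ∧
      a ∈ Set.extremePoints ℝ Q ∧ b ∈ Set.extremePoints ℝ Q ∧ ℓ ∩ frontier Q = {a, b}) :
    k ≤ m ∧
      (k = m ↔ ∀ q ∈ Set.extremePoints ℝ Q, {ℓ | IsSideline P ℓ ∧ q ∈ ℓ}.ncard = 2) := by
  have hSfin := Stmt18Aux.sidelines_finite hPfin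
  have hS := Stmt18Aux.sidelines_card hP hPfin
  have hsum := Stmt18Aux.count hSfin hQfin fun l hl => by
    obtain ⟨a, b, hab, ha, hb, he⟩ := hside l hl
    have : Set.extremePoints ℝ Q ∩ l = {a, b} := by
      apply Subset.antisymm
      · rintro x ⟨hx, hxl⟩
        rw [← he]
        exact ⟨hxl, Stmt18Aux.ext_frontier hx⟩
      · have hab' : a ∈ l ∩ frontier Q ∧ b ∈ l ∩ frontier Q := by rw [he]; simp
        rintro x (rfl | rfl)
        · exact ⟨ha, hab'.1.1⟩
        · exact ⟨hb, hab'.2.1⟩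
    rw [this, Set.ncard_pair hab]
  rw [hS, hk] at hsum
  have hle : ∀ q ∈ hQfin.toFinset, {l | l ∈ {l | IsSideline P l} ∧ q ∈ l}.ncard ≤ 2 :=
    fun q _ => Stmt18Aux.le_two hP.2.1 hPfin q
  have hconst : ∑ _q ∈ hQfin.toFinset, 2 = 2 * m := by
    rw [Finset.sum_const, smul_eq_mul, ← Set.ncard_eq_toFinset_card _ hQfin, hm, mul_comm]
  have hsle := Finset.sum_le_sum hle
  rw [hconst, hsum] at hsle
  refine ⟨by omega, ?_⟩
  have hiff := Finset.sum_eq_sum_iff_of_le hle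
  rw [hconst, hsum] at hiff
  constructor
  · intro hkm q hq
    exact hiff.mp (by rw [hkm]) q (by simpa using hq)
  · intro h
    have := hiff.mpr fun q hq => h q (by simpa using hq)
    omega
end
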